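/- Let Ω ⊂ ℝ² be a bounded convex open set with C² boundary and let u ∈ Φ₀(Ω) ∩ C²(E_u). Then the anisotropic Hessian integral admits the representation I_H[u,Ω] = ∫_Ω u det_H[u] dx = (1/2) ∫_Ω k_H(x) H(∇u)³ dx. -/

import Mathlib

open MeasureTheory Set
open scoped ENNReal NNReal RealInnerProductSpace

noncomputable section

/-- The plane `ℝ²`. -/
abbrev E2 : Type := EuclideanSpace ℝ (Fin 2)

/-- The `i`-th partial derivative of `f` at `x`. -/
def pd (f : E2 → ℝ) (i : Fin 2) (x : E2) : ℝ :=
  fderiv ℝ f x (EuclideanSpace.single i 1)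

/-- The Hessian matrix of `f` at `x`. -/
def hessian (f : E2 → ℝ) (x : E2) : Matrix (Fin 2) (Fin 2) ℝ :=
  Matrix.of fun i j => pd (pd f j) i x

/-- The hypotheses on the anisotropy `H`: a convex, coercive, positively `1`-homogeneous even
function, with `H²` strongly convex and `C²` away from the origin. -/
structure IsAnisoNorm (H : E2 → ℝ) : Prop where
  nonneg : ∀ ξ, 0 ≤ H ξ
  convex : ConvexOn ℝ Set.univ H
  coercive : ∃ α > 0, ∀ ξ, α * ‖ξ‖ ≤ H ξ
  homog : ∀ (t : ℝ) (ξ : E2), H (t • ξ) = |t| * H ξ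
  smooth : ContDiffOn ℝ 2 H {(0 : E2)}ᶜ
  posdef : ∀ ξ : E2, ξ ≠ 0 → ∀ v : E2, v ≠ 0 →
      0 < ∑ i, ∑ j, hessian (fun z => H z ^ 2) ξ i j * v i * v j

/-- The polar function `H^o(v) = sup_{ξ ≠ 0} (ξ·v)/H(ξ)`. -/
def polar (H : E2 → ℝ) (v : E2) : ℝ :=
  ⨆ ξ : {ξ : E2 // ξ ≠ 0}, ⟪(ξ : E2), v⟫ / H ξ

/-- The Wulff shape `𝒲 = {H^o < 1}`. -/
def Wulff (H : E2 → ℝ) : Set E2 := {ξ | polar H ξ < 1}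

/-- The scaled Wulff shape `𝒲_R = {H^o < R}`. -/
def wulffR (H : E2 → ℝ) (R : ℝ) : Set E2 := {ξ | polar H ξ < R}

/-- `κ`, the Lebesgue measure of the Wulff shape. -/
def kappa (H : E2 → ℝ) : ℝ := (volume (Wulff H)).toReal

/-- `F(ξ) = H(ξ)²/2`. -/
def Fani (H : E2 → ℝ) (ξ : E2) : ℝ := H ξ ^ 2 / 2

/-- The matrix `A[u] = ∇²_ξ F(∇u) · ∇²u`. -/
def Amat (H u : E2 → ℝ) (x : E2) : Matrix (Fin 2) (Fin 2) ℝ :=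
  hessian (Fani H) (gradient u x) * hessian u x

/-- The anisotropic Monge–Ampère operator `det_H[u] = det ∇²_ξF(∇u) · det ∇²u`. -/
def detH (H u : E2 → ℝ) (x : E2) : ℝ :=
  (hessian (Fani H) (gradient u x)).det * (hessian u x).det

/-- The cofactor matrix of a `2×2` matrix. -/
def cof (B : Matrix (Fin 2) (Fin 2) ℝ) : Matrix (Fin 2) (Fin 2) ℝ :=
  Matrix.of ![![B 1 1, -B 1 0], ![-B 0 1, B 0 0]]

/-- The anisotropic curvature of the level line of `u` through `x`:
`k_H(x) = -Σ_{i,j} H_{ξ_iξ_j}(∇u) u_{ij}`. -/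
def kH (H u : E2 → ℝ) (x : E2) : ℝ :=
  -∑ i, ∑ j, hessian H (gradient u x) i j * hessian u x i j

/-- The class `Φ₀(Ω)`: `W^{2,2}(Ω) ∩ C¹(Ω̄)` functions vanishing on `∂Ω`, concave in `Ω`. -/
structure MemPhi0 (Ω : Set E2) (u : E2 → ℝ) : Prop where
  sobolev : ∀ i j, MemLp (fun x => hessian u x i j) 2 (volume.restrict Ω)
  c1 : ContDiffOn ℝ 1 u (closure Ω)
  bzero : ∀ x ∈ frontier Ω, u x = 0
  concave : ConcaveOn ℝ Ω u

/-- `max_{Ω̄} u`. -/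
def maxcl (Ω : Set E2) (u : E2 → ℝ) : ℝ := sSup (u '' closure Ω)

/-- The set `E_u = {x ∈ Ω : 0 ≤ u(x) < max_{Ω̄} u}`. -/
def Eu (Ω : Set E2) (u : E2 → ℝ) : Set E2 :=
  {x ∈ Ω | 0 ≤ u x ∧ u x < maxcl Ω u}

/-- `K` has `C²` boundary: it admits a global `C²` defining function with nonvanishing
gradient on the boundary. -/
def HasC2Boundary (K : Set E2) : Prop :=
  ∃ φ : E2 → ℝ, ContDiff ℝ 2 φ ∧ K = {x | φ x < 0} ∧
    frontier K = {x | φ x = 0} ∧ ∀ x ∈ frontier K, gradient φ x ≠ 0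

/-- `K` has `C¹` boundary. -/
def HasC1Boundary (K : Set E2) : Prop :=
  ∃ φ : E2 → ℝ, ContDiff ℝ 1 φ ∧ K = {x | φ x < 0} ∧
    frontier K = {x | φ x = 0} ∧ ∀ x ∈ frontier K, gradient φ x ≠ 0

/-- The Euclidean outer unit normal `ν = -∇u/|∇u|` to a superlevel set of `u`. -/
def nuLevel (u : E2 → ℝ) (x : E2) : E2 := -(‖gradient u x‖⁻¹ • gradient u x)

/-- The level set `Σ_t = {u = t}` (in `Ω̄`). -/
def levelSet (Ω : Set E2) (u : E2 → ℝ) (t : ℝ) : Set E2 :=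
  {x ∈ closure Ω | u x = t}

/-- The superlevel set `Ω_t = {u > t}`. -/
def superLevel (Ω : Set E2) (u : E2 → ℝ) (t : ℝ) : Set E2 :=
  {x ∈ Ω | t < u x}

/-- `λ_H(t) = P_H({u > t}) = ∫_{{u = t}} H(ν) dℋ¹`. -/
def lambdaH (H : E2 → ℝ) (Ω : Set E2) (u : E2 → ℝ) (t : ℝ) : ℝ :=
  ∫ x in levelSet Ω u t, H (nuLevel u x) ∂(μH[1] : Measure E2)

/-- The anisotropic perimeter `P_H(Ω) = λ_H(0)` of `Ω = {u > 0}`. -/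
def PerH (H : E2 → ℝ) (Ω : Set E2) (u : E2 → ℝ) : ℝ := lambdaH H Ω u 0

/-- The rearrangement `u^♦(s) = sup{t ≥ 0 : λ_H(t) ≥ s}` of `u` with respect to the
anisotropic perimeter. -/
def diamondRe (H : E2 → ℝ) (Ω : Set E2) (u : E2 → ℝ) (s : ℝ) : ℝ :=
  sSup {t : ℝ | 0 ≤ t ∧ s ≤ lambdaH H Ω u t}

/-- The anisotropic radial symmetrand `u^★(x) = u^♦(2κ H^o(x))`. -/
def starRe (H : E2 → ℝ) (Ω : Set E2) (u : E2 → ℝ) (x : E2) : ℝ :=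
  diamondRe H Ω u (2 * kappa H * polar H x)

/-- `Ω^★ = 𝒲_R` with `R = P_H(Ω)/(2κ)`. -/
def OmegaStar (H : E2 → ℝ) (Ω : Set E2) (u : E2 → ℝ) : Set E2 :=
  wulffR H (PerH H Ω u / (2 * kappa H))

/-- The distribution function `μ(t) = |{x ∈ Ω : |f(x)| > t}|`. -/
def distrib (Ω : Set E2) (f : E2 → ℝ) (t : ℝ) : ℝ :=
  (volume {x ∈ Ω | t < |f x|}).toReal

/-- The decreasing rearrangement `f*(s) = sup{t : μ(t) > s}`. -/
def decRe (Ω : Set E2) (f : E2 → ℝ) (s : ℝ) : ℝ :=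
  sSup {t : ℝ | s < distrib Ω f t}

/-!
Write `{f, g} = ∂₀f ∂₁g - ∂₁f ∂₀g`. With `V = ∇F(∇u)`, the chain rule gives `det_H[u] = {V₀, V₁}`,
while homogeneity of `H` (Euler's identity for `∇H` and for `∇F`) gives
`V₀ {u, V₁} - V₁ {u, V₀} = -k_H H(∇u)³`. The theorem is thus an instance of the weak form
`∫ φ {f, g} = -½ ∫ (f {φ, g} - g {φ, f})` of the Jacobian determinant, with `φ = u`, `f = V₀`,
`g = V₁`.

This weak form holds for `C¹` functions with `φ` compactly supported, whereas `u` is not compactly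
supported and `V` need not be differentiable at critical points of `u`. Both are repaired by one
device: a positively `1`-homogeneous function, smooth away from the origin, is replaced by a smooth
function vanishing near the origin, and by homogeneity the Lipschitz constant of the replacement
does not depend on the scale of the cutoff. Applied to `id` this approximates `u`, applied to `∇F`
it approximates `V`, and dominated convergence applies because `D²u ∈ L²`. At critical points both
sides vanish almost everywhere: by concavity the critical set is convex, hence has null frontier,
and `D²u = 0` in its interior.
-/

open Filter Topology

section IntegrationByParts

variable {E : Type*} [NormedAddCommGroup E] [NormedSpace ℝ E] [FiniteDimensional ℝ E]
  [MeasurableSpace E] [BorelSpace E] {μ : Measure E} [μ.IsAddHaarMeasure] {f g : E → ℝ}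

lemma integral_comp_add_mul_fderiv (hf : ContDiff ℝ 1 f) (cf : HasCompactSupport f)
    (hg : ContDiff ℝ 1 g) (h v : E) :
    ∫ x, f (x + h) * fderiv ℝ g x v ∂μ = -∫ x, g (x + -h) * fderiv ℝ f x v ∂μ := by
  have hfh : ContDiff ℝ 1 fun x => f (x + h) := hf.comp (by fun_prop)
  have cfh : HasCompactSupport fun x => f (x + h) := cf.comp_homeomorph (Homeomorph.addRight h)
  have := hfh.continuous_fderiv one_ne_zero
  have := hg.continuous_fderiv one_ne_zero
  have := hfh.continuous
  have := hg.continuous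
  rw [integral_mul_fderiv_eq_neg_fderiv_mul_of_integrable
    (Continuous.integrable_of_hasCompactSupport (by fun_prop) (cfh.fderiv_apply ℝ v).mul_right)
    (Continuous.integrable_of_hasCompactSupport (by fun_prop) cfh.mul_right)
    (Continuous.integrable_of_hasCompactSupport (by fun_prop) cfh.mul_right)
    (fun x _ => hfh.differentiable one_ne_zero x) (fun x _ => hg.differentiable one_ne_zero x),
    ← integral_add_right_eq_self _ (-h)]
  simp [fderiv_comp_add_right, mul_comm]

lemma tendsto_integral_slope_mul (hf : ContDiff ℝ 1 f) (cf : HasCompactSupport f)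
    (hg : Integrable g μ) (v : E) :
    Tendsto (fun t : ℝ => t⁻¹ * ∫ x, (f (x + t • v) - f x) * g x ∂μ) (𝓝[>] 0)
      (𝓝 (∫ x, fderiv ℝ f x v * g x ∂μ)) := by
  obtain ⟨C, hC⟩ := hf.lipschitzWith_of_hasCompactSupport cf one_ne_zero
  have := hC.integral_inv_smul_sub_mul_tendsto_integral_lineDeriv_mul hg v
  simpa only [(hf.differentiable one_ne_zero _).lineDeriv_eq_fderiv, smul_eq_mul, mul_assoc,
    integral_const_mul] using this

/- One cannot integrate by parts twice, as `f` and `g` are only `C¹`; instead one integrates by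
parts once, with a difference quotient in place of the other derivative. -/
theorem integral_fderiv_mul_fderiv_comm (hf : ContDiff ℝ 1 f) (cf : HasCompactSupport f)
    (hg : ContDiff ℝ 1 g) (cg : HasCompactSupport g) (v w : E) :
    ∫ x, fderiv ℝ f x v * fderiv ℝ g x w ∂μ = ∫ x, fderiv ℝ f x w * fderiv ℝ g x v ∂μ := by
  have integrable_fderiv {k : E → ℝ} (hk : ContDiff ℝ 1 k) (ck : HasCompactSupport k) (z : E) :
      Integrable (fun x => fderiv ℝ k x z) μ :=
    ((hk.continuous_fderiv one_ne_zero).clm_apply continuous_const).integrable_of_hasCompactSupport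
      (ck.fderiv_apply ℝ z)
  have integrable_mul {k l : E → ℝ} (hk : Continuous k) (hl : ContDiff ℝ 1 l)
      (cl : HasCompactSupport l) (z : E) : Integrable (fun x => k x * fderiv ℝ l x z) μ :=
    (hk.mul ((hl.continuous_fderiv one_ne_zero).clm_apply
      continuous_const)).integrable_of_hasCompactSupport (cl.fderiv_apply ℝ z).mul_left
  have hf' := tendsto_integral_slope_mul hf cf (integrable_fderiv hg cg w) v
  have hg' := (tendsto_integral_slope_mul hg cg (integrable_fderiv hf cf w) (-v)).neg
  have := hf.continuous
  have := hg.continuous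
  have quotient_eq (t : ℝ) : t⁻¹ * ∫ x, (f (x + t • v) - f x) * fderiv ℝ g x w ∂μ =
      -(t⁻¹ * ∫ x, (g (x + t • -v) - g x) * fderiv ℝ f x w ∂μ) := by
    simp only [sub_mul]
    rw [integral_sub (integrable_mul (by fun_prop) hg cg w) (integrable_mul (by fun_prop) hg cg w),
      integral_sub (integrable_mul (by fun_prop) hf cf w) (integrable_mul (by fun_prop) hf cf w)]
    have shifted := integral_comp_add_mul_fderiv (μ := μ) hf cf hg (t • v) w
    have unshifted := integral_comp_add_mul_fderiv (μ := μ) hf cf hg 0 w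
    simp only [neg_zero, add_zero] at unshifted
    rw [shifted, unshifted, smul_neg]
    ring
  simp only [quotient_eq] at hf'
  rw [tendsto_nhds_unique hf' hg', ← integral_neg]
  simp [mul_comm]

end IntegrationByParts

lemma exists_contDiff_hasCompactSupport_eventuallyEq {E F : Type*} [NormedAddCommGroup E]
    [NormedSpace ℝ E] [FiniteDimensional ℝ E] [NormedAddCommGroup F] [NormedSpace ℝ F]
    {K U : Set E} (hK : IsCompact K) (hU : IsOpen U) (hKU : K ⊆ U) {f : E → F}
    (hf : ContDiffOn ℝ 1 f U) :
    ∃ g : E → F, ContDiff ℝ 1 g ∧ HasCompactSupport g ∧ ∀ x ∈ K, g =ᶠ[𝓝 x] f := by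
  obtain ⟨L, hL, hKL, hLU⟩ := exists_compact_between hK hU hKU
  obtain ⟨χ, χ_one, χ_zero, -⟩ := exists_contMDiffMap_one_nhds_of_subset_interior
    (modelWithCornersSelf ℝ E) (n := 1) hK.isClosed hKL
  have χ_supp : tsupport χ ⊆ L :=
    closure_minimal (fun x hx => by_contra fun hxL => hx (χ_zero x hxL)) hL.isClosed
  have cχ : HasCompactSupport χ := hL.of_isClosed_subset (isClosed_tsupport _) χ_supp
  refine ⟨fun x => χ x • f x, ?_, cχ.smul_right, fun x hx => ?_⟩
  · refine contMDiff_iff_contDiff.1 (contMDiff_of_tsupport fun x hx => ?_)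
    have hxU : x ∈ U := hLU (χ_supp (tsupport_smul_subset_left χ f hx))
    exact (χ.contMDiff.contDiff.contDiffAt.smul (hf.contDiffAt (hU.mem_nhds hxU))).contMDiffAt
  · filter_upwards [χ_one.filter_mono (nhds_le_nhdsSet hx)] with y hy
    simp [hy]

section Bracket

/-- The Poisson bracket `{f, g} = ∂₀f ∂₁g - ∂₁f ∂₀g`, that is, the Jacobian determinant of the
planar map `(f, g)`. -/
def bracket (f g : E2 → ℝ) (x : E2) : ℝ := pd f 0 x * pd g 1 x - pd f 1 x * pd g 0 x

variable {f g φ : E2 → ℝ} {x : E2}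

lemma bracket_congr {f' g' : E2 → ℝ} (hf : f =ᶠ[𝓝 x] f') (hg : g =ᶠ[𝓝 x] g') :
    bracket f g x = bracket f' g' x := by
  simp only [bracket, pd, hf.fderiv_eq, hg.fderiv_eq]

lemma bracket_antisymm (f g : E2 → ℝ) (x : E2) : bracket g f x = -bracket f g x := by
  simp only [bracket]; ring

lemma bracket_mul_left (hφ : DifferentiableAt ℝ φ x) (hf : DifferentiableAt ℝ f x) :
    bracket (fun y => φ y * f y) g x = φ x * bracket f g x + f x * bracket φ g x := by
  simp only [bracket, pd, fderiv_fun_mul hφ hf, add_apply, smul_apply,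
    smul_eq_mul]
  ring

lemma bracket_eq_zero_of_fderiv_left_eq_zero (hf : fderiv ℝ f x = 0) (g : E2 → ℝ) :
    bracket f g x = 0 := by
  simp [bracket, pd, hf]

lemma bracket_eq_zero_of_fderiv_right_eq_zero (f : E2 → ℝ) (hg : fderiv ℝ g x = 0) :
    bracket f g x = 0 := by
  simp [bracket, pd, hg]

lemma abs_pd_le_norm_fderiv (f : E2 → ℝ) (i : Fin 2) (x : E2) : |pd f i x| ≤ ‖fderiv ℝ f x‖ := by
  simpa [pd] using (fderiv ℝ f x).le_opNorm (EuclideanSpace.single i 1)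

lemma abs_bracket_le (f g : E2 → ℝ) (x : E2) :
    |bracket f g x| ≤ 2 * (‖fderiv ℝ f x‖ * ‖fderiv ℝ g x‖) := by
  have abs_pd_mul_le (i j : Fin 2) : |pd f i x * pd g j x| ≤ ‖fderiv ℝ f x‖ * ‖fderiv ℝ g x‖ := by
    rw [abs_mul]
    gcongr <;> apply abs_pd_le_norm_fderiv
  calc |bracket f g x| ≤ |pd f 0 x * pd g 1 x| + |pd f 1 x * pd g 0 x| := abs_sub _ _
    _ ≤ _ := by linarith [abs_pd_mul_le 0 1, abs_pd_mul_le 1 0]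

lemma continuousOn_pd {Ω : Set E2} (hΩ : IsOpen Ω) (hf : ContDiffOn ℝ 1 f Ω) (i : Fin 2) :
    ContinuousOn (pd f i) Ω :=
  (hf.continuousOn_fderiv_of_isOpen hΩ le_rfl).clm_apply continuousOn_const

lemma continuousOn_bracket {Ω : Set E2} (hΩ : IsOpen Ω) (hf : ContDiffOn ℝ 1 f Ω)
    (hg : ContDiffOn ℝ 1 g Ω) : ContinuousOn (bracket f g) Ω :=
  ((continuousOn_pd hΩ hf 0).mul (continuousOn_pd hΩ hg 1)).sub
    ((continuousOn_pd hΩ hf 1).mul (continuousOn_pd hΩ hg 0))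

lemma integrable_mul_bracket (hφ : ContDiff ℝ 1 φ) (cφ : HasCompactSupport φ)
    (hf : ContDiff ℝ 1 f) (hg : ContDiff ℝ 1 g) :
    Integrable fun x => φ x * bracket f g x := by
  have : Continuous (bracket f g) := continuousOn_univ.1
    (continuousOn_bracket isOpen_univ hf.contDiffOn hg.contDiffOn)
  exact (hφ.continuous.mul this).integrable_of_hasCompactSupport cφ.mul_right

lemma integral_bracket_eq_zero (hf : ContDiff ℝ 1 f) (cf : HasCompactSupport f)
    (hg : ContDiff ℝ 1 g) (cg : HasCompactSupport g) : ∫ x, bracket f g x = 0 := by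
  have integrable_pd_mul_pd (i j : Fin 2) : Integrable fun x => pd f i x * pd g j x :=
    (((hf.continuous_fderiv one_ne_zero).clm_apply continuous_const).mul
      ((hg.continuous_fderiv one_ne_zero).clm_apply
        continuous_const)).integrable_of_hasCompactSupport (cf.fderiv_apply ℝ _).mul_right
  unfold bracket
  rw [integral_sub (integrable_pd_mul_pd 0 1) (integrable_pd_mul_pd 1 0), sub_eq_zero]
  exact integral_fderiv_mul_fderiv_comm hf cf hg cg _ _

lemma integral_mul_bracket_eq_neg (hφ : ContDiff ℝ 1 φ) (cφ : HasCompactSupport φ)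
    (hf : ContDiff ℝ 1 f) (cf : HasCompactSupport f) (hg : ContDiff ℝ 1 g)
    (cg : HasCompactSupport g) :
    ∫ x, φ x * bracket f g x = -∫ x, f x * bracket φ g x := by
  rw [eq_neg_iff_add_eq_zero, ← integral_add (integrable_mul_bracket hφ cφ hf hg)
    (integrable_mul_bracket hf cf hφ hg), ← integral_bracket_eq_zero (hφ.mul hf) cφ.mul_right hg cg]
  congr with x
  rw [bracket_mul_left (hφ.differentiable one_ne_zero x) (hf.differentiable one_ne_zero x)]

lemma integral_mul_bracket_of_hasCompactSupport (hφ : ContDiff ℝ 1 φ) (cφ : HasCompactSupport φ)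
    (hf : ContDiff ℝ 1 f) (cf : HasCompactSupport f) (hg : ContDiff ℝ 1 g)
    (cg : HasCompactSupport g) :
    ∫ x, φ x * bracket f g x =
      -(1 / 2) * ∫ x, (f x * bracket φ g x - g x * bracket φ f x) := by
  rw [integral_sub (integrable_mul_bracket hf cf hφ hg) (integrable_mul_bracket hg cg hφ hf)]
  have swap_f := integral_mul_bracket_eq_neg hφ cφ hf cf hg cg
  have swap_g := integral_mul_bracket_eq_neg hφ cφ hg cg hf cf
  simp only [bracket_antisymm f g, mul_neg, integral_neg] at swap_g
  linarith

/-- The weak form of the Jacobian determinant: the right-hand side is linear in the derivatives of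
`f` and `g`. -/
theorem setIntegral_mul_bracket {Ω : Set E2} (hΩ : IsOpen Ω) (hφ : ContDiff ℝ 1 φ)
    (cφ : HasCompactSupport φ) (φ_supp : tsupport φ ⊆ Ω) (hf : ContDiffOn ℝ 1 f Ω)
    (hg : ContDiffOn ℝ 1 g Ω) :
    ∫ x in Ω, φ x * bracket f g x =
      -(1 / 2) * ∫ x in Ω, (f x * bracket φ g x - g x * bracket φ f x) := by
  obtain ⟨f', hf', cf', f'_eq⟩ := exists_contDiff_hasCompactSupport_eventuallyEq cφ hΩ φ_supp hf
  obtain ⟨g', hg', cg', g'_eq⟩ := exists_contDiff_hasCompactSupport_eventuallyEq cφ hΩ φ_supp hg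
  have bracket_zero {x : E2} (hx : x ∉ tsupport φ) (k : E2 → ℝ) : bracket φ k x = 0 :=
    bracket_eq_zero_of_fderiv_left_eq_zero (fderiv_of_notMem_tsupport ℝ hx) k
  have lhs_eq (x : E2) : φ x * bracket f g x = φ x * bracket f' g' x := by
    by_cases hx : x ∈ tsupport φ
    · rw [bracket_congr (f'_eq x hx) (g'_eq x hx)]
    · simp [image_eq_zero_of_notMem_tsupport hx]
  have rhs_eq (x : E2) : f x * bracket φ g x - g x * bracket φ f x =
      f' x * bracket φ g' x - g' x * bracket φ f' x := by
    by_cases hx : x ∈ tsupport φ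
    · rw [(f'_eq x hx).eq_of_nhds, (g'_eq x hx).eq_of_nhds, bracket_congr .rfl (f'_eq x hx),
        bracket_congr .rfl (g'_eq x hx)]
    · simp [bracket_zero hx]
  simp only [lhs_eq, rhs_eq]
  rw [setIntegral_eq_integral_of_forall_compl_eq_zero,
    setIntegral_eq_integral_of_forall_compl_eq_zero]
  · exact integral_mul_bracket_of_hasCompactSupport hφ cφ hf' cf' hg' cg'
  · exact fun x hx => by simp [bracket_zero (mt (@φ_supp x) hx)]
  · exact fun x hx => by simp [image_eq_zero_of_notMem_tsupport (mt (@φ_supp x) hx)]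

end Bracket

/-- Positive homogeneity of degree `k`; no condition is imposed for scaling by `t ≤ 0`. -/
def IsPosHomogeneous {E F : Type*} [SMul ℝ E] [SMul ℝ F] (k : ℕ) (f : E → F) : Prop :=
  ∀ t : ℝ, 0 < t → ∀ p, f (t • p) = t ^ k • f p

namespace IsPosHomogeneous

variable {E F : Type*} [NormedAddCommGroup E] [NormedSpace ℝ E] [NormedAddCommGroup F]
  [NormedSpace ℝ F] {k : ℕ} {f : E → F}

protected lemma fderiv (hf : IsPosHomogeneous (k + 1) f) : IsPosHomogeneous k (fderiv ℝ f) := by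
  intro t ht p
  have smul_fderiv : t • fderiv ℝ f (t • p) = t ^ (k + 1) • fderiv ℝ f p := by
    rw [← fderiv_comp_smul, show (fun q => f (t • q)) = t ^ (k + 1) • f from funext (hf t ht),
      fderiv_const_smul_field, Pi.smul_apply]
  rw [← inv_smul_smul₀ ht.ne' (fderiv ℝ f (t • p)), smul_fderiv, pow_succ', mul_smul,
    inv_smul_smul₀ ht.ne']

lemma fderiv_self (hf : IsPosHomogeneous k f) {p : E} (hfp : DifferentiableAt ℝ f p) :
    fderiv ℝ f p p = (k : ℝ) • f p := by
  have along_ray : HasDerivAt (fun t : ℝ => f (t • p)) (fderiv ℝ f p p) 1 := by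
    have ray : HasDerivAt (fun t : ℝ => t • p) p 1 := by
      simpa using (hasDerivAt_id (1 : ℝ)).smul_const p
    exact hfp.hasFDerivAt.comp_hasDerivAt_of_eq 1 ray (one_smul ℝ p).symm
  have power : HasDerivAt (fun t : ℝ => t ^ k • f p) ((k : ℝ) • f p) 1 := by
    simpa using (hasDerivAt_pow k (1 : ℝ)).smul_const (f p)
  refine along_ray.unique (power.congr_of_eventuallyEq ?_)
  filter_upwards [lt_mem_nhds one_pos] with t ht using hf t ht p

end IsPosHomogeneous

section Truncation

variable {E F : Type*} [NormedAddCommGroup E] [NormedAddCommGroup F] [NormedSpace ℝ F]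
  {f : E → F} {r : ℝ} {p : E}

/-- The function `f`, smoothly cut off so as to vanish on the ball of radius `1 / r`. For `f` smooth
away from the origin this is an approximation of `f`, as `r → ∞`, by smooth functions. -/
def truncation [NormedSpace ℝ E] (f : E → F) (r : ℝ) (p : E) : F :=
  Real.smoothTransition (‖r • p‖ ^ 2 - 1) • f p

section

variable [NormedSpace ℝ E]

lemma truncation_eq_zero (f : E → F) (hp : ‖r • p‖ ≤ 1) : truncation f r p = 0 := by
  rw [truncation, Real.smoothTransition.zero_of_nonpos
    (sub_nonpos.2 (pow_le_one₀ (norm_nonneg _) hp)), zero_smul]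

@[simp]
lemma truncation_zero_right (f : E → F) (r : ℝ) : truncation f r 0 = 0 :=
  truncation_eq_zero f (by simp)

lemma truncation_eventuallyEq_zero (f : E → F) (hp : ‖r • p‖ < 1) :
    truncation f r =ᶠ[𝓝 p] 0 := by
  filter_upwards [(continuous_const_smul r).norm.continuousAt.eventually_lt_const hp] with q hq
    using truncation_eq_zero f hq.le

lemma truncation_eventuallyEq (f : E → F) (hp : 2 < ‖r • p‖ ^ 2) : truncation f r =ᶠ[𝓝 p] f := by
  have : Continuous fun q : E => ‖r • q‖ ^ 2 := by fun_prop
  filter_upwards [this.continuousAt.eventually_const_lt hp] with q hq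
  rw [truncation, Real.smoothTransition.one_of_one_le (by linarith), one_smul]

lemma eventually_truncation_eventuallyEq (f : E → F) (hp : p ≠ 0) :
    ∀ᶠ r in atTop, truncation f r =ᶠ[𝓝 p] f := by
  have : Tendsto (fun r : ℝ => ‖r • p‖ ^ 2) atTop atTop := by
    simp only [norm_smul, mul_pow, Real.norm_eq_abs, sq_abs]
    exact (tendsto_pow_atTop two_ne_zero).atTop_mul_const (by positivity)
  filter_upwards [this.eventually_gt_atTop 2] with r hr using truncation_eventuallyEq f hr

lemma truncation_eq_inv_smul (hf : IsPosHomogeneous 1 f) (hr : 0 < r) :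
    truncation f r = r⁻¹ • fun p => truncation f 1 (r • p) := by
  ext p
  simp only [Pi.smul_apply, truncation, hf r hr, one_smul, pow_one]
  rw [smul_comm, inv_smul_smul₀ hr.ne']

lemma fderiv_truncation (hf : IsPosHomogeneous 1 f) (hr : 0 < r) (p : E) :
    fderiv ℝ (truncation f r) p = fderiv ℝ (truncation f 1) (r • p) := by
  rw [truncation_eq_inv_smul hf hr, fderiv_const_smul_field, Pi.smul_apply,
    fderiv_comp_smul, inv_smul_smul₀ hr.ne']

end

variable [InnerProductSpace ℝ E]

lemma contDiff_truncation {n : ℕ∞} (hf : ContDiffOn ℝ n f {0}ᶜ) (r : ℝ) :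
    ContDiff ℝ n (truncation f r) := by
  refine contDiff_iff_contDiffAt.2 fun p => ?_
  rcases lt_or_ge ‖r • p‖ 1 with small | large
  · exact contDiffAt_const.congr_of_eventuallyEq (truncation_eventuallyEq_zero f small)
  · have hp : p ≠ 0 := by rintro rfl; norm_num at large
    have cutoff : ContDiff ℝ n fun q : E => Real.smoothTransition (‖r • q‖ ^ 2 - 1) :=
      Real.smoothTransition.contDiff.comp
        (((contDiff_id.const_smul r).norm_sq ℝ).sub contDiff_const)
    exact cutoff.contDiffAt.smul (hf.contDiffAt (isOpen_compl_singleton.mem_nhds hp))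

lemma exists_norm_fderiv_truncation_one_le [ProperSpace E] (hf : IsPosHomogeneous 1 f)
    (hf' : ContDiffOn ℝ 1 f {0}ᶜ) : ∃ C, ∀ p, ‖fderiv ℝ (truncation f 1) p‖ ≤ C := by
  obtain ⟨C, hC⟩ := (isCompact_closedBall (0 : E) 2).exists_bound_of_continuousOn
    ((contDiff_truncation hf' 1).continuous_fderiv one_ne_zero).continuousOn
  have fderiv_eq {p : E} (hp : 2 ≤ ‖p‖) : fderiv ℝ (truncation f 1) p = fderiv ℝ f p :=
    (truncation_eventuallyEq f (by rw [one_smul]; nlinarith)).fderiv_eq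
  refine ⟨C, fun p => ?_⟩
  rcases le_or_gt ‖p‖ 2 with inside | outside
  · exact hC p (mem_closedBall_zero_iff.2 inside)
  · have norm_projection : ‖(2 / ‖p‖) • p‖ = 2 := by
      rw [norm_smul, Real.norm_of_nonneg (by positivity), div_mul_cancel₀ _ (by positivity)]
    have fderiv_projection : fderiv ℝ f ((2 / ‖p‖) • p) = fderiv ℝ f p := by
      simpa using hf.fderiv (2 / ‖p‖) (by positivity) p
    rw [fderiv_eq outside.le, ← fderiv_projection, ← fderiv_eq norm_projection.ge]
    exact hC _ (mem_closedBall_zero_iff.2 norm_projection.le)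

lemma exists_lipschitzWith_truncation [ProperSpace E] (hf : IsPosHomogeneous 1 f)
    (hf' : ContDiffOn ℝ 1 f {0}ᶜ) : ∃ C : ℝ≥0, ∀ r > 0, LipschitzWith C (truncation f r) := by
  obtain ⟨C, hC⟩ := exists_norm_fderiv_truncation_one_le hf hf'
  refine ⟨C.toNNReal, fun r hr => lipschitzWith_of_nnnorm_fderiv_le
    ((contDiff_truncation hf' r).differentiable one_ne_zero) fun p => ?_⟩
  rw [fderiv_truncation hf hr, ← NNReal.coe_le_coe]
  exact (hC _).trans (Real.le_coe_toNNReal C)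

end Truncation

section PartialDerivatives

variable {f g u : E2 → ℝ} {x : E2}

lemma gradient_apply_eq_pd (f : E2 → ℝ) (x : E2) (i : Fin 2) : gradient f x i = pd f i x := by
  rw [pd, ← inner_gradient_left, EuclideanSpace.inner_single_right]
  simp

lemma fderiv_apply_eq_sum_pd (f : E2 → ℝ) (x v : E2) :
    fderiv ℝ f x v = ∑ i, v i * pd f i x := by
  conv_lhs => rw [← (EuclideanSpace.basisFun (Fin 2) ℝ).sum_repr v]
  simp [pd]

lemma IsPosHomogeneous.pd {k : ℕ} (hf : IsPosHomogeneous (k + 1) f) (i : Fin 2) :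
    IsPosHomogeneous k (pd f i) := fun t ht p => by
  simp [_root_.pd, hf.fderiv t ht p]

lemma contDiffAt_pd (hf : ContDiffAt ℝ 2 f x) (i : Fin 2) : ContDiffAt ℝ 1 (pd f i) x :=
  (hf.fderiv_right (by norm_num)).clm_apply contDiffAt_const

lemma contDiffAt_gradient (hf : ContDiffAt ℝ 2 f x) : ContDiffAt ℝ 1 (gradient f) x :=
  (InnerProductSpace.toDual ℝ E2).symm.contDiff.contDiffAt.comp x (hf.fderiv_right (by norm_num))

lemma isSymm_hessian (hf : ContDiffAt ℝ 2 f x) : (hessian f x).IsSymm := by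
  have hf' : DifferentiableAt ℝ (fderiv ℝ f) x :=
    (hf.fderiv_right (m := 1) (by norm_num)).differentiableAt one_ne_zero
  have hessian_eq (i j : Fin 2) : hessian f x i j =
      fderiv ℝ (fderiv ℝ f) x (EuclideanSpace.single i 1) (EuclideanSpace.single j 1) := by
    simp only [hessian, Matrix.of_apply]
    unfold pd
    simp [fderiv_clm_apply hf' (differentiableAt_const _)]
  ext i j
  rw [Matrix.transpose_apply, hessian_eq, hessian_eq]
  exact hf.isSymmSndFDerivAt (by simp) _ _

lemma fderiv_gradient_single (hu : DifferentiableAt ℝ (gradient u) x) (i k : Fin 2) :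
    fderiv ℝ (gradient u) x (EuclideanSpace.single i 1) k = hessian u x i k := by
  have := (EuclideanSpace.proj k : E2 →L[ℝ] ℝ).hasFDerivAt.comp x hu.hasFDerivAt
  simp only [hessian, Matrix.of_apply, pd, ← funext (gradient_apply_eq_pd u · k)]
  exact (congrArg (· (EuclideanSpace.single i 1)) this.fderiv).symm

lemma pd_comp_gradient (hg : DifferentiableAt ℝ g (gradient u x))
    (hu : DifferentiableAt ℝ (gradient u) x) (i : Fin 2) :
    pd (fun y => g (gradient u y)) i x = ∑ k, hessian u x i k * pd g k (gradient u x) := by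
  rw [pd, fderiv_fun_comp x hg hu, ContinuousLinearMap.comp_apply, fderiv_apply_eq_sum_pd]
  simp only [fderiv_gradient_single hu]

lemma norm_le_sum_abs (v : E2) : ‖v‖ ≤ ∑ i, |v i| := by
  conv_lhs => rw [← (EuclideanSpace.basisFun (Fin 2) ℝ).sum_repr v]
  exact norm_sum_le_of_le _ fun i _ => by simp [norm_smul]

lemma norm_fderiv_gradient_le (u : E2 → ℝ) (x : E2) :
    ‖fderiv ℝ (gradient u) x‖ ≤ ∑ i, ∑ k, |hessian u x i k| := by
  by_cases hu : DifferentiableAt ℝ (gradient u) x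
  · refine ContinuousLinearMap.opNorm_le_bound _ (by positivity) fun v => ?_
    calc ‖fderiv ℝ (gradient u) x v‖
        = ‖∑ i, v i • fderiv ℝ (gradient u) x (EuclideanSpace.single i 1)‖ := by
          conv_lhs => rw [← (EuclideanSpace.basisFun (Fin 2) ℝ).sum_repr v]
          simp
      _ ≤ ∑ i, ‖v‖ * ∑ k, |hessian u x i k| := by
          refine norm_sum_le_of_le _ fun i _ => ?_
          rw [norm_smul]
          gcongr
          · exact PiLp.norm_apply_le v i
          · simp only [← fderiv_gradient_single hu]
            exact norm_le_sum_abs _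
      _ = (∑ i, ∑ k, |hessian u x i k|) * ‖v‖ := by rw [← Finset.mul_sum, mul_comm]
  · rw [fderiv_zero_of_not_differentiableAt hu, norm_zero]
    positivity

end PartialDerivatives

section PointwiseIdentities

variable {H u : E2 → ℝ} {p x : E2}

lemma IsPosHomogeneous.fani (hH : IsPosHomogeneous 1 H) : IsPosHomogeneous 2 (Fani H) :=
  fun t ht p => by simp only [Fani, hH t ht, smul_eq_mul]; ring

lemma contDiffAt_fani {n : WithTop ℕ∞} (hH : ContDiffAt ℝ n H p) : ContDiffAt ℝ n (Fani H) p :=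
  (hH.pow 2).div_const 2

lemma pd_fani (hH : DifferentiableAt ℝ H p) (i : Fin 2) :
    pd (Fani H) i p = H p * pd H i p := by
  have : HasFDerivAt (Fani H) _ p := (hH.hasFDerivAt.pow 2).mul_const (2⁻¹ : ℝ)
  simp [pd, this.fderiv]
  ring

lemma hessian_fani (hH : ContDiffAt ℝ 2 H p) (i j : Fin 2) :
    hessian (Fani H) p i j = pd H i p * pd H j p + H p * hessian H p i j := by
  have pd_eq : pd (Fani H) j =ᶠ[𝓝 p] fun q => H q * pd H j q := by
    filter_upwards [hH.eventually (by simp)] with q hq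
      using pd_fani (hq.differentiableAt two_ne_zero) j
  simp only [hessian, Matrix.of_apply]
  rw [pd, pd_eq.fderiv_eq, fderiv_fun_mul (hH.differentiableAt two_ne_zero)
    ((contDiffAt_pd hH j).differentiableAt one_ne_zero)]
  simp only [add_apply, smul_apply, smul_eq_mul, pd]
  ring

open Matrix in
lemma hessian_mulVec_self {k : ℕ} {f : E2 → ℝ} (hf : IsPosHomogeneous (k + 1) f)
    (hfp : ContDiffAt ℝ 2 f p) : hessian f p *ᵥ p.ofLp = fun i => k * pd f i p := by
  ext i
  have euler := (hf.pd i).fderiv_self ((contDiffAt_pd hfp i).differentiableAt one_ne_zero)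
  rw [fderiv_apply_eq_sum_pd] at euler
  rw [← smul_eq_mul, ← euler, mulVec, dotProduct]
  refine Finset.sum_congr rfl fun j _ => ?_
  rw [mul_comm, ← (isSymm_hessian hfp).apply]
  rfl

open Matrix in
lemma exists_eq_smul_vecMulVec_of_mulVec_eq_zero {K : Type*} [Field K]
    {A : Matrix (Fin 2) (Fin 2) K} (hA : A.IsSymm) {v : Fin 2 → K} (hv : v ≠ 0)
    (hAv : A *ᵥ v = 0) : ∃ c : K, A = c • vecMulVec ![-v 1, v 0] ![-v 1, v 0] := by
  have symm : A 1 0 = A 0 1 := hA.apply 0 1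
  have row_zero : A 0 0 * v 0 + A 0 1 * v 1 = 0 := by
    simpa [mulVec, dotProduct] using congrFun hAv 0
  have row_one : A 0 1 * v 0 + A 1 1 * v 1 = 0 := by
    simpa [mulVec, dotProduct, symm] using congrFun hAv 1
  obtain hv | hv : v 0 ≠ 0 ∨ v 1 ≠ 0 := by
    simpa [funext_iff, Fin.forall_fin_two, or_iff_not_imp_left] using hv
  · have off_diagonal : A 0 1 = -(A 1 1 * v 1) / v 0 := by
      rw [eq_div_iff hv]
      linear_combination row_one
    have diagonal : A 0 0 = A 1 1 * v 1 ^ 2 / v 0 ^ 2 := by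
      rw [eq_div_iff (pow_ne_zero 2 hv)]
      linear_combination v 0 * row_zero - v 1 * row_one
    refine ⟨A 1 1 / v 0 ^ 2, ?_⟩
    ext i j
    fin_cases i <;> fin_cases j <;> simp [symm, off_diagonal, diagonal] <;> field_simp
  · have off_diagonal : A 0 1 = -(A 0 0 * v 0) / v 1 := by
      rw [eq_div_iff hv]
      linear_combination row_zero
    have diagonal : A 1 1 = A 0 0 * v 0 ^ 2 / v 1 ^ 2 := by
      rw [eq_div_iff (pow_ne_zero 2 hv)]
      linear_combination v 1 * row_one - v 0 * row_zero
    refine ⟨A 0 0 / v 1 ^ 2, ?_⟩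
    ext i j
    fin_cases i <;> fin_cases j <;> simp [symm, off_diagonal, diagonal] <;> field_simp

open Matrix in
lemma pow_three_smul_hessian (hH : IsPosHomogeneous 1 H) (hHp : ContDiffAt ℝ 2 H p) (hp : p ≠ 0) :
    H p ^ 3 • hessian H p =
      (hessian (Fani H) p).det • vecMulVec ![-p 1, p 0] ![-p 1, p 0] := by
  have hv : p.ofLp ≠ 0 := by simpa using hp
  obtain ⟨c, hc⟩ := exists_eq_smul_vecMulVec_of_mulVec_eq_zero (isSymm_hessian hHp) hv
    (by ext; simp [hessian_mulVec_self hH hHp])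
  have euler := hH.fderiv_self (hHp.differentiableAt two_ne_zero)
  rw [fderiv_apply_eq_sum_pd, Fin.sum_univ_two, Nat.cast_one, one_smul] at euler
  have det_eq : (hessian (Fani H) p).det = c * H p ^ 3 := by
    rw [det_fin_two]
    simp [hessian_fani hHp, hc, ← euler]
    ring
  rw [det_eq, hc, smul_smul, mul_comm c]

lemma bracket_pd_fani_comp_gradient (hH : ContDiffAt ℝ 2 H (gradient u x))
    (hu : ContDiffAt ℝ 2 u x) :
    bracket (fun y => pd (Fani H) 0 (gradient u y)) (fun y => pd (Fani H) 1 (gradient u y)) x =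
      detH H u x := by
  have hF (i : Fin 2) := (contDiffAt_pd (contDiffAt_fani hH) i).differentiableAt one_ne_zero
  have hu' := (contDiffAt_gradient hu).differentiableAt one_ne_zero
  simp only [bracket, pd_comp_gradient (hF _) hu', detH,
    Matrix.det_fin_two, Fin.sum_univ_two]
  simp only [hessian, Matrix.of_apply]
  ring

lemma kH_mul_pow_three (hH : IsPosHomogeneous 1 H) (hHx : ContDiffAt ℝ 2 H (gradient u x))
    (hx : gradient u x ≠ 0) :
    kH H u x * H (gradient u x) ^ 3 =
      -((hessian (Fani H) (gradient u x)).det * (pd u 1 x * pd u 1 x * hessian u x 0 0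
        - pd u 1 x * pd u 0 x * hessian u x 0 1 - pd u 0 x * pd u 1 x * hessian u x 1 0
        + pd u 0 x * pd u 0 x * hessian u x 1 1)) := by
  have curvature (i j : Fin 2) := congrFun₂ (pow_three_smul_hessian hH hHx hx) i j
  simp only [Matrix.smul_apply, Matrix.vecMulVec_apply, smul_eq_mul,
    gradient_apply_eq_pd u] at curvature
  calc kH H u x * H (gradient u x) ^ 3
      = -∑ i, ∑ j, H (gradient u x) ^ 3 * hessian H (gradient u x) i j * hessian u x i j := by
        simp only [kH, Fin.sum_univ_two]
        ring
    _ = _ := by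
        simp only [curvature, Fin.sum_univ_two, Matrix.cons_val_zero, Matrix.cons_val_one]
        ring

/- With `M = ∇²F(∇u)` and `q = (-∂₁u, ∂₀u)`, Euler's identity turns the left-hand side into the
determinant of `M ∇u` and `M ∇²u q`, that is, `det M · ⟨q, ∇²u q⟩`. -/
lemma pd_fani_mul_bracket_sub (hH : IsPosHomogeneous 1 H)
    (hHx : ContDiffAt ℝ 2 H (gradient u x)) (hu : ContDiffAt ℝ 2 u x) (hx : gradient u x ≠ 0) :
    pd (Fani H) 0 (gradient u x) * bracket u (fun y => pd (Fani H) 1 (gradient u y)) x -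
      pd (Fani H) 1 (gradient u x) * bracket u (fun y => pd (Fani H) 0 (gradient u y)) x =
      -(kH H u x * H (gradient u x) ^ 3) := by
  have hF := contDiffAt_fani hHx
  have hF' (i : Fin 2) := (contDiffAt_pd hF i).differentiableAt one_ne_zero
  have hu' := (contDiffAt_gradient hu).differentiableAt one_ne_zero
  have euler (i : Fin 2) := congrFun (hessian_mulVec_self hH.fani hF) i
  simp only [Matrix.mulVec, dotProduct, Fin.sum_univ_two, Nat.cast_one, one_mul,
    gradient_apply_eq_pd u] at euler
  simp only [kH_mul_pow_three hH hHx hx, bracket,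
    pd_comp_gradient (hF' _) hu', ← euler, Fin.sum_univ_two, Matrix.det_fin_two]
  simp only [show ∀ i j, pd (pd (Fani H) i) j (gradient u x) = hessian (Fani H) (gradient u x) j i
    from fun _ _ => rfl, (isSymm_hessian hF).apply 0 1, (isSymm_hessian hu).apply 0 1]
  ring

end PointwiseIdentities

section Concave

variable {E : Type*} [NormedAddCommGroup E] [NormedSpace ℝ E] {Ω : Set E} {u : E → ℝ} {x y : E}

lemma sub_le_fderiv_of_concaveOn (hu : ConcaveOn ℝ Ω u) (hux : DifferentiableAt ℝ u x)
    (hx : x ∈ Ω) (hy : y ∈ Ω) : u y - u x ≤ fderiv ℝ u x (y - x) := by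
  have along_segment : HasDerivAt (u ∘ AffineMap.lineMap x y) (fderiv ℝ u x (y - x)) (0 : ℝ) :=
    hux.hasFDerivAt.comp_hasDerivAt_of_eq 0 AffineMap.hasDerivAt_lineMap (by simp)
  simpa [slope_def_field] using
    (hu.comp_affineMap (AffineMap.lineMap x y)).slope_le_of_hasDerivAt (x := (0 : ℝ)) (y := 1)
      (by simpa) (by simpa) one_pos along_segment

lemma isMaxOn_of_concaveOn_of_fderiv_eq_zero (hu : ConcaveOn ℝ Ω u)
    (hux : DifferentiableAt ℝ u x) (hx : x ∈ Ω) (hx' : fderiv ℝ u x = 0) : IsMaxOn u Ω x :=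
  fun y hy => by simpa [hx'] using sub_le_fderiv_of_concaveOn hu hux hx hy

lemma convex_setOf_fderiv_eq_zero (hΩ : IsOpen Ω) (hu : ConcaveOn ℝ Ω u)
    (hu' : DifferentiableOn ℝ u Ω) : Convex ℝ {x ∈ Ω | fderiv ℝ u x = 0} := by
  rcases {x ∈ Ω | fderiv ℝ u x = 0}.eq_empty_or_nonempty with empty | ⟨z, hz, hz'⟩
  · exact empty ▸ convex_empty
  · have z_max := isMaxOn_of_concaveOn_of_fderiv_eq_zero hu (hu'.differentiableAt
      (hΩ.mem_nhds hz)) hz hz'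
    convert hu.convex_ge (u z) using 1
    ext x
    refine and_congr_right fun hx => ⟨fun hx' => ?_, fun hzx => ?_⟩
    · exact isMaxOn_of_concaveOn_of_fderiv_eq_zero hu
        (hu'.differentiableAt (hΩ.mem_nhds hx)) hx hx' hz
    · have x_max : IsMaxOn u Ω x := fun y hy => (z_max hy).trans hzx
      exact (x_max.isLocalMax (hΩ.mem_nhds hx)).fderiv_eq_zero

lemma ae_fderiv_eventuallyEq_zero [FiniteDimensional ℝ E] [MeasurableSpace E] [BorelSpace E]
    {μ : Measure E} [μ.IsAddHaarMeasure] (hΩ : IsOpen Ω) (hu : ConcaveOn ℝ Ω u)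
    (hu' : DifferentiableOn ℝ u Ω) :
    ∀ᵐ x ∂μ.restrict Ω, fderiv ℝ u x = 0 → fderiv ℝ u =ᶠ[𝓝 x] 0 := by
  have frontier_null := (convex_setOf_fderiv_eq_zero hΩ hu hu').addHaar_frontier μ
  filter_upwards [ae_restrict_of_ae (measure_eq_zero_iff_ae_notMem.1 frontier_null),
    ae_restrict_mem hΩ.measurableSet] with x not_frontier hxΩ hx
  have x_interior : x ∈ interior {x ∈ Ω | fderiv ℝ u x = 0} :=
    by_contra fun h => not_frontier ⟨subset_closure ⟨hxΩ, hx⟩, h⟩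
  filter_upwards [mem_interior_iff_mem_nhds.1 x_interior] with y hy using hy.2

lemma nonneg_of_concaveOn_of_nonneg_frontier [FiniteDimensional ℝ E] [Nontrivial E]
    (hΩ : IsOpen Ω) (hΩb : Bornology.IsBounded Ω) (hu : ConcaveOn ℝ Ω u)
    (hu' : DifferentiableOn ℝ u Ω) (huc : ContinuousOn u (closure Ω))
    (hu_frontier : ∀ z ∈ frontier Ω, 0 ≤ u z) (hx : x ∈ Ω) : 0 ≤ u x := by
  have := FiniteDimensional.proper_real E
  by_contra! hux
  obtain ⟨z, hz, z_min⟩ :=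
    hΩb.isCompact_closure.exists_isMinOn ⟨x, subset_closure hx⟩ huc
  have huz : u z < 0 := (z_min (subset_closure hx)).trans_lt hux
  have hzΩ : z ∈ Ω := by
    by_contra hzΩ
    exact huz.not_ge (hu_frontier z (hΩ.frontier_eq ▸ ⟨hz, hzΩ⟩))
  have hz' : fderiv ℝ u z = 0 :=
    (z_min.isLocalMin (mem_of_superset (hΩ.mem_nhds hzΩ) subset_closure)).fderiv_eq_zero
  have z_max : ∀ y ∈ closure Ω, u y ≤ u z := le_on_closure
    (isMaxOn_of_concaveOn_of_fderiv_eq_zero hu (hu'.differentiableAt (hΩ.mem_nhds hzΩ)) hzΩ hz')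
    huc continuousOn_const
  obtain ⟨w, hw⟩ : (frontier Ω).Nonempty := nonempty_frontier_iff.2
    ⟨⟨x, hx⟩, fun h => NormedSpace.unbounded_univ ℝ E (h ▸ hΩb)⟩
  exact ((z_max w (frontier_subset_closure hw)).trans_lt huz).not_ge (hu_frontier w hw)

end Concave

section Composition

section

variable {E F G : Type*} [TopologicalSpace E] [TopologicalSpace F] [Zero F] [Zero G] {Ω : Set E}
  {f : E → F} {g : F → G} {x : E}

lemma comp_eventuallyEq_zero (hf : ContinuousAt f x) (hx : f x = 0)
    (hg : g =ᶠ[𝓝 0] 0) : (fun y => g (f y)) =ᶠ[𝓝 x] 0 :=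
  (hx ▸ hf.tendsto).eventually hg

lemma tsupport_indicator_comp_subset
    (hf : ContinuousOn f (closure Ω)) (hf' : ∀ x ∈ frontier Ω, f x = 0) (hg : g =ᶠ[𝓝 0] 0) :
    tsupport (Ω.indicator fun x => g (f x)) ⊆ interior Ω := by
  intro x hx
  contrapose! hx
  rw [notMem_tsupport_iff_eventuallyEq]
  by_cases hx_closure : x ∈ closure Ω
  · have := (hf x hx_closure).tendsto
    rw [hf' x ⟨hx_closure, hx⟩] at this
    filter_upwards [eventually_nhdsWithin_iff.1 (this.eventually hg)] with y hy
    by_cases hyΩ : y ∈ Ω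
    · rw [indicator_of_mem hyΩ, hy (subset_closure hyΩ)]
      rfl
    · exact indicator_of_notMem hyΩ _
  · filter_upwards [isClosed_closure.isOpen_compl.mem_nhds hx_closure] with y hy
    exact indicator_of_notMem (fun h => hy (subset_closure h)) _

end

variable {E F G : Type*} [NormedAddCommGroup E] [NormedSpace ℝ E] [NormedAddCommGroup F]
  [NormedSpace ℝ F] [NormedAddCommGroup G] [NormedSpace ℝ G] {Ω : Set E} {f : E → F} {x : E}

lemma exists_norm_fderiv_le_of_contDiffOn_closure [ProperSpace E] (hΩ : IsOpen Ω)
    (hΩb : Bornology.IsBounded Ω) (hΩc : Convex ℝ Ω) (hf : ContDiffOn ℝ 1 f (closure Ω)) :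
    ∃ C, ∀ x ∈ Ω, ‖fderiv ℝ f x‖ ≤ C := by
  rcases Ω.eq_empty_or_nonempty with rfl | hne
  · exact ⟨0, by simp⟩
  · have unique_diff : UniqueDiffOn ℝ (closure Ω) := uniqueDiffOn_convex hΩc.closure
      ((hΩ.interior_eq.symm ▸ hne).mono (interior_mono subset_closure))
    obtain ⟨C, hC⟩ := hΩb.isCompact_closure.exists_bound_of_continuousOn
      (hf.continuousOn_fderivWithin unique_diff le_rfl)
    refine ⟨C, fun x hx => ?_⟩
    rw [← fderivWithin_of_mem_nhds (mem_of_superset (hΩ.mem_nhds hx) subset_closure)]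
    exact hC x (subset_closure hx)

lemma norm_fderiv_comp_le {g : F → G} {C : ℝ≥0} (hC : LipschitzWith C g)
    (hg : DifferentiableAt ℝ g (f x)) (hf : DifferentiableAt ℝ f x) :
    ‖fderiv ℝ (fun y => g (f y)) x‖ ≤ C * ‖fderiv ℝ f x‖ := by
  rw [fderiv_fun_comp x hg hf]
  refine (ContinuousLinearMap.opNorm_comp_le _ _).trans ?_
  gcongr
  exact norm_fderiv_le_of_lipschitz ℝ hC

lemma contDiffOn_comp_of_eventuallyEq_zero {g : F → G} (hΩ : IsOpen Ω)
    (hf : ContinuousOn f Ω) (hf' : ∀ x ∈ Ω, f x ≠ 0 → ContDiffAt ℝ 1 f x) (hg : ContDiff ℝ 1 g)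
    (hg' : g =ᶠ[𝓝 0] 0) : ContDiffOn ℝ 1 (fun x => g (f x)) Ω := by
  refine fun x hx => ContDiffAt.contDiffWithinAt ?_
  by_cases hfx : f x = 0
  · exact contDiffAt_const.congr_of_eventuallyEq
      (comp_eventuallyEq_zero (hf.continuousAt (hΩ.mem_nhds hx)) hfx hg')
  · exact hg.contDiffAt.comp x (hf' x hx hfx)

end Composition

section Gradient

variable {E : Type*} [NormedAddCommGroup E] [InnerProductSpace ℝ E] [CompleteSpace E]

lemma norm_gradient (f : E → ℝ) (x : E) : ‖gradient f x‖ = ‖fderiv ℝ f x‖ :=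
  LinearIsometryEquiv.norm_map _ _

lemma gradient_eq_zero_iff {f : E → ℝ} {x : E} : gradient f x = 0 ↔ fderiv ℝ f x = 0 := by
  rw [← norm_eq_zero, norm_gradient, norm_eq_zero]

end Gradient

namespace MemPhi0

variable {Ω : Set E2} {u : E2 → ℝ} {x : E2}

lemma contDiffOn (hu : MemPhi0 Ω u) : ContDiffOn ℝ 1 u Ω := hu.c1.mono subset_closure

lemma differentiableAt (hu : MemPhi0 Ω u) (hΩ : IsOpen Ω) (hx : x ∈ Ω) : DifferentiableAt ℝ u x :=
  (hu.contDiffOn.contDiffAt (hΩ.mem_nhds hx)).differentiableAt one_ne_zero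

lemma continuousOn_gradient (hu : MemPhi0 Ω u) (hΩ : IsOpen Ω) : ContinuousOn (gradient u) Ω :=
  (InnerProductSpace.toDual ℝ E2).symm.continuous.comp_continuousOn
    (hu.contDiffOn.continuousOn_fderiv_of_isOpen hΩ le_rfl)

lemma nonneg (hu : MemPhi0 Ω u) (hΩ : IsOpen Ω) (hΩb : Bornology.IsBounded Ω) (hx : x ∈ Ω) :
    0 ≤ u x :=
  nonneg_of_concaveOn_of_nonneg_frontier hΩ hΩb hu.concave
    (hu.contDiffOn.differentiableOn one_ne_zero) hu.c1.continuousOn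
    (fun z hz => (hu.bzero z hz).ge) hx

lemma ne_zero_of_gradient_ne_zero (hu : MemPhi0 Ω u) (hΩ : IsOpen Ω)
    (hΩb : Bornology.IsBounded Ω) (hx : x ∈ Ω) (hx' : gradient u x ≠ 0) : u x ≠ 0 := by
  intro hux
  have x_min : IsMinOn u Ω x := fun y hy => hux.trans_le (hu.nonneg hΩ hΩb hy)
  exact hx' (gradient_eq_zero_iff.2 (x_min.isLocalMin (hΩ.mem_nhds hx)).fderiv_eq_zero)

lemma mem_Eu_of_gradient_ne_zero (hu : MemPhi0 Ω u) (hΩ : IsOpen Ω)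
    (hΩb : Bornology.IsBounded Ω) (hx : x ∈ Ω) (hx' : gradient u x ≠ 0) : x ∈ Eu Ω u := by
  refine ⟨hx, hu.nonneg hΩ hΩb hx, ?_⟩
  by_contra! hux
  have x_max : IsMaxOn u Ω x := fun y hy => (le_csSup
    (hΩb.isCompact_closure.bddAbove_image hu.c1.continuousOn)
    (mem_image_of_mem u (subset_closure hy))).trans hux
  exact hx' (gradient_eq_zero_iff.2 (x_max.isLocalMax (hΩ.mem_nhds hx)).fderiv_eq_zero)

lemma contDiffAt_two (hu : MemPhi0 Ω u) (hΩ : IsOpen Ω) (hΩb : Bornology.IsBounded Ω)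
    (hu2 : ContDiffOn ℝ 2 u (Eu Ω u)) (hx : x ∈ Ω) (hx' : gradient u x ≠ 0) :
    ContDiffAt ℝ 2 u x := by
  refine hu2.contDiffAt ?_
  filter_upwards [hΩ.mem_nhds hx,
    ((hu.continuousOn_gradient hΩ).continuousAt (hΩ.mem_nhds hx)).eventually_ne hx'] with y hy hy'
    using hu.mem_Eu_of_gradient_ne_zero hΩ hΩb hy hy'

lemma ae_hessian_eq_zero (hu : MemPhi0 Ω u) (hΩ : IsOpen Ω) :
    ∀ᵐ x ∂volume.restrict Ω, gradient u x = 0 → hessian u x = 0 := by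
  filter_upwards [ae_fderiv_eventuallyEq_zero hΩ hu.concave
    (hu.contDiffOn.differentiableOn one_ne_zero)] with x hx hx'
  ext i j
  have pd_eq : pd u j =ᶠ[𝓝 x] 0 := by
    filter_upwards [hx (gradient_eq_zero_iff.1 hx')] with y hy
    simp [pd, hy]
  simp [hessian, pd, pd_eq.fderiv_eq]

lemma memLp_fderiv_gradient (hu : MemPhi0 Ω u) :
    MemLp (fun x => ‖fderiv ℝ (gradient u) x‖) 2 (volume.restrict Ω) := by
  have hessian_sum : MemLp (fun x => ∑ i, ∑ k, |hessian u x i k|) 2 (volume.restrict Ω) :=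
    memLp_finsetSum _ fun i _ => memLp_finsetSum _ fun k _ => (hu.sobolev i k).abs
  refine hessian_sum.mono' (measurable_fderiv ℝ _).norm.aestronglyMeasurable
    (.of_forall fun x => ?_)
  simpa using norm_fderiv_gradient_le u x

lemma exists_abs_le (hu : MemPhi0 Ω u) (hΩb : Bornology.IsBounded Ω) :
    ∃ C, ∀ x ∈ Ω, |u x| ≤ C := by
  obtain ⟨C, hC⟩ := hΩb.isCompact_closure.exists_bound_of_continuousOn hu.c1.continuousOn
  exact ⟨C, fun x hx => hC x (subset_closure hx)⟩

lemma exists_norm_fderiv_le (hu : MemPhi0 Ω u) (hΩ : IsOpen Ω) (hΩb : Bornology.IsBounded Ω) :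
    ∃ C, ∀ x ∈ Ω, ‖fderiv ℝ u x‖ ≤ C :=
  exists_norm_fderiv_le_of_contDiffOn_closure hΩ hΩb hu.concave.1 hu.c1

end MemPhi0

section Approximation

/-- The function `u` on `Ω`, cut off where it is small; its support in `Ω` is compact when `u` is
continuous on `closure Ω` and vanishes on the boundary. -/
def testApprox (Ω : Set E2) (u : E2 → ℝ) (r : ℝ) : E2 → ℝ :=
  Ω.indicator fun x => truncation id r (u x)

/-- The `i`-th component of `∇F(∇u)`, truncated so as to vanish near the critical points of `u`. -/
def fluxApprox (H u : E2 → ℝ) (r : ℝ) (i : Fin 2) (x : E2) : ℝ :=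
  truncation (pd (Fani H) i) r (gradient u x)

variable {H u : E2 → ℝ} {Ω : Set E2} {r : ℝ} {x : E2} {i : Fin 2}

lemma isPosHomogeneous_id {E : Type*} [SMul ℝ E] : IsPosHomogeneous 1 (id : E → E) :=
  fun t _ p => by simp

lemma contDiffOn_pd_fani (hH' : ContDiffOn ℝ 2 H {0}ᶜ) (i : Fin 2) :
    ContDiffOn ℝ 1 (pd (Fani H) i) {0}ᶜ := fun _ hp =>
  (contDiffAt_pd (contDiffAt_fani (hH'.contDiffAt (isOpen_compl_singleton.mem_nhds hp)))
    i).contDiffWithinAt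

lemma exists_lipschitzWith_truncation_pd_fani (hH : IsPosHomogeneous 1 H)
    (hH' : ContDiffOn ℝ 2 H {0}ᶜ) :
    ∃ C : ℝ≥0, ∀ r > 0, ∀ i, LipschitzWith C (truncation (pd (Fani H) i) r) := by
  choose C hC using fun i => exists_lipschitzWith_truncation (hH.fani.pd i)
    (contDiffOn_pd_fani hH' i)
  exact ⟨Finset.univ.sup C, fun r hr i =>
    (hC i r hr).weaken (Finset.le_sup (Finset.mem_univ i))⟩

lemma testApprox_eventuallyEq (hΩ : IsOpen Ω) (hx : x ∈ Ω) :
    testApprox Ω u r =ᶠ[𝓝 x] fun y => truncation id r (u y) := by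
  filter_upwards [hΩ.mem_nhds hx] with y hy using indicator_of_mem hy _

lemma eventually_testApprox_eventuallyEq (hΩ : IsOpen Ω) (hx : x ∈ Ω) (hux : ContinuousAt u x)
    (hux' : u x ≠ 0) : ∀ᶠ r in atTop, testApprox Ω u r =ᶠ[𝓝 x] u := by
  filter_upwards [eventually_truncation_eventuallyEq id hux'] with r hr
  exact (testApprox_eventuallyEq hΩ hx).trans (hux.eventually hr)

lemma tsupport_testApprox_subset (hu : MemPhi0 Ω u) (r : ℝ) :
    tsupport (testApprox Ω u r) ⊆ Ω :=
  (tsupport_indicator_comp_subset hu.c1.continuousOn hu.bzero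
    (truncation_eventuallyEq_zero id (by simp))).trans interior_subset

lemma hasCompactSupport_testApprox (hΩb : Bornology.IsBounded Ω) (hu : MemPhi0 Ω u) (r : ℝ) :
    HasCompactSupport (testApprox Ω u r) :=
  hΩb.isCompact_closure.of_isClosed_subset (isClosed_tsupport _)
    ((tsupport_testApprox_subset hu r).trans subset_closure)

lemma contDiff_testApprox (hΩ : IsOpen Ω) (hu : MemPhi0 Ω u) (r : ℝ) :
    ContDiff ℝ 1 (testApprox Ω u r) := by
  refine contMDiff_iff_contDiff.1 (contMDiff_of_tsupport fun x hx => ContDiffAt.contMDiffAt ?_)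
  have hxΩ := tsupport_testApprox_subset hu r hx
  exact ((contDiff_truncation contDiff_id.contDiffOn r).contDiffAt.comp x
    (hu.contDiffOn.contDiffAt (hΩ.mem_nhds hxΩ))).congr_of_eventuallyEq
      (testApprox_eventuallyEq hΩ hxΩ)

lemma exists_testApprox_le (hΩ : IsOpen Ω) (hΩb : Bornology.IsBounded Ω) (hu : MemPhi0 Ω u) :
    ∃ C, ∀ r > 0, ∀ x ∈ Ω,
      |testApprox Ω u r x| ≤ C ∧ ‖fderiv ℝ (testApprox Ω u r) x‖ ≤ C := by
  obtain ⟨K, hK⟩ := exists_lipschitzWith_truncation (isPosHomogeneous_id (E := ℝ))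
    contDiff_id.contDiffOn
  obtain ⟨M, hM⟩ := hu.exists_abs_le hΩb
  obtain ⟨D, hD⟩ := hu.exists_norm_fderiv_le hΩ hΩb
  refine ⟨max (K * M) (K * D), fun r hr x hx => ⟨le_max_of_le_left ?_, le_max_of_le_right ?_⟩⟩
  · rw [(testApprox_eventuallyEq hΩ hx).eq_of_nhds]
    refine ((hK r hr).norm_le_mul (truncation_zero_right _ _) (u x)).trans ?_
    gcongr
    exact hM x hx
  · rw [(testApprox_eventuallyEq hΩ hx).fderiv_eq]
    refine (norm_fderiv_comp_le (hK r hr) ((contDiff_truncation contDiff_id.contDiffOn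
      r).differentiable one_ne_zero _) (hu.differentiableAt hΩ hx)).trans ?_
    gcongr
    exact hD x hx

lemma eventually_fluxApprox_eventuallyEq (hux : ContinuousAt (gradient u) x)
    (hux' : gradient u x ≠ 0) : ∀ᶠ r in atTop, ∀ i,
      fluxApprox H u r i =ᶠ[𝓝 x] fun y => pd (Fani H) i (gradient u y) := by
  refine eventually_all.2 fun i => ?_
  filter_upwards [eventually_truncation_eventuallyEq (pd (Fani H) i) hux'] with r hr
    using hux.eventually hr

lemma fderiv_fluxApprox_eq_zero (hux : ContinuousAt (gradient u) x) (hux' : gradient u x = 0) :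
    fderiv ℝ (fluxApprox H u r i) x = 0 := by
  have : fluxApprox H u r i =ᶠ[𝓝 x] 0 :=
    comp_eventuallyEq_zero (f := gradient u) hux hux' (truncation_eventuallyEq_zero _ (by simp))
  simp [this.fderiv_eq]

lemma contDiffOn_fluxApprox (hH' : ContDiffOn ℝ 2 H {0}ᶜ) (hΩ : IsOpen Ω)
    (hΩb : Bornology.IsBounded Ω) (hu : MemPhi0 Ω u) (hu2 : ContDiffOn ℝ 2 u (Eu Ω u)) (r : ℝ)
    (i : Fin 2) : ContDiffOn ℝ 1 (fluxApprox H u r i) Ω :=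
  contDiffOn_comp_of_eventuallyEq_zero (f := gradient u) hΩ (hu.continuousOn_gradient hΩ)
    (fun _ hx hx' => contDiffAt_gradient (hu.contDiffAt_two hΩ hΩb hu2 hx hx'))
    (contDiff_truncation (contDiffOn_pd_fani hH' i) r)
    (truncation_eventuallyEq_zero _ (by simp))

lemma exists_fluxApprox_le (hH : IsPosHomogeneous 1 H) (hH' : ContDiffOn ℝ 2 H {0}ᶜ)
    (hΩ : IsOpen Ω) (hΩb : Bornology.IsBounded Ω) (hu : MemPhi0 Ω u)
    (hu2 : ContDiffOn ℝ 2 u (Eu Ω u)) :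
    ∃ C, ∀ r > 0, ∀ x ∈ Ω, ∀ i, |fluxApprox H u r i x| ≤ C ∧
      ‖fderiv ℝ (fluxApprox H u r i) x‖ ≤ C * ‖fderiv ℝ (gradient u) x‖ := by
  obtain ⟨K, hK⟩ := exists_lipschitzWith_truncation_pd_fani hH hH'
  obtain ⟨D, hD⟩ := hu.exists_norm_fderiv_le hΩ hΩb
  refine ⟨max (K * D) K, fun r hr x hx i => ⟨le_max_of_le_left ?_, ?_⟩⟩
  · refine ((hK r hr i).norm_le_mul (truncation_zero_right _ _) (gradient u x)).trans ?_
    rw [norm_gradient]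
    gcongr
    exact hD x hx
  · by_cases hx' : gradient u x = 0
    · rw [fderiv_fluxApprox_eq_zero ((hu.continuousOn_gradient hΩ).continuousAt
        (hΩ.mem_nhds hx)) hx', norm_zero]
      positivity
    · refine (norm_fderiv_comp_le (hK r hr i)
        ((contDiff_truncation (contDiffOn_pd_fani hH' i) r).differentiable one_ne_zero _)
        ((contDiffAt_gradient (hu.contDiffAt_two hΩ hΩb hu2 hx hx')).differentiableAt
          one_ne_zero)).trans ?_
      gcongr
      exact le_max_right _ _

lemma eventually_testApprox_mul_bracket_eq (hH' : ContDiffOn ℝ 2 H {0}ᶜ) (hΩ : IsOpen Ω)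
    (hΩb : Bornology.IsBounded Ω) (hu : MemPhi0 Ω u) (hu2 : ContDiffOn ℝ 2 u (Eu Ω u))
    (hx : x ∈ Ω) (hessian_zero : gradient u x = 0 → hessian u x = 0) :
    ∀ᶠ r in atTop, testApprox Ω u r x * bracket (fluxApprox H u r 0) (fluxApprox H u r 1) x =
      u x * detH H u x := by
  have gradient_continuous := (hu.continuousOn_gradient hΩ).continuousAt (hΩ.mem_nhds hx)
  by_cases hx' : gradient u x = 0
  · refine .of_forall fun r => ?_
    rw [bracket_eq_zero_of_fderiv_left_eq_zero
      (fderiv_fluxApprox_eq_zero gradient_continuous hx')]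
    simp [detH, hessian_zero hx']
  · filter_upwards [eventually_fluxApprox_eventuallyEq gradient_continuous hx',
      eventually_testApprox_eventuallyEq hΩ hx (hu.differentiableAt hΩ hx).continuousAt
        (hu.ne_zero_of_gradient_ne_zero hΩ hΩb hx hx')] with r flux_eq test_eq
    rw [test_eq.eq_of_nhds, bracket_congr (flux_eq 0) (flux_eq 1), bracket_pd_fani_comp_gradient
      (hH'.contDiffAt (isOpen_compl_singleton.mem_nhds hx'))
      (hu.contDiffAt_two hΩ hΩb hu2 hx hx')]

lemma eventually_fluxApprox_mul_bracket_sub_eq (hH : IsPosHomogeneous 1 H)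
    (hH' : ContDiffOn ℝ 2 H {0}ᶜ) (hΩ : IsOpen Ω) (hΩb : Bornology.IsBounded Ω)
    (hu : MemPhi0 Ω u) (hu2 : ContDiffOn ℝ 2 u (Eu Ω u)) (hx : x ∈ Ω)
    (hessian_zero : gradient u x = 0 → hessian u x = 0) :
    ∀ᶠ r in atTop,
      fluxApprox H u r 0 x * bracket (testApprox Ω u r) (fluxApprox H u r 1) x -
        fluxApprox H u r 1 x * bracket (testApprox Ω u r) (fluxApprox H u r 0) x =
      -(kH H u x * H (gradient u x) ^ 3) := by
  have gradient_continuous := (hu.continuousOn_gradient hΩ).continuousAt (hΩ.mem_nhds hx)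
  by_cases hx' : gradient u x = 0
  · refine .of_forall fun r => ?_
    have bracket_zero (i : Fin 2) : bracket (testApprox Ω u r) (fluxApprox H u r i) x = 0 :=
      bracket_eq_zero_of_fderiv_right_eq_zero _ (fderiv_fluxApprox_eq_zero gradient_continuous hx')
    simp [bracket_zero, kH, hessian_zero hx']
  · filter_upwards [eventually_fluxApprox_eventuallyEq gradient_continuous hx',
      eventually_testApprox_eventuallyEq hΩ hx (hu.differentiableAt hΩ hx).continuousAt
        (hu.ne_zero_of_gradient_ne_zero hΩ hΩb hx hx')] with r flux_eq test_eq
    rw [bracket_congr test_eq (flux_eq 0), bracket_congr test_eq (flux_eq 1),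
      (flux_eq 0).eq_of_nhds, (flux_eq 1).eq_of_nhds, pd_fani_mul_bracket_sub hH
      (hH'.contDiffAt (isOpen_compl_singleton.mem_nhds hx'))
      (hu.contDiffAt_two hΩ hΩb hu2 hx hx') hx']

lemma tendsto_setIntegral_testApprox_mul_bracket (hH : IsPosHomogeneous 1 H)
    (hH' : ContDiffOn ℝ 2 H {0}ᶜ) (hΩ : IsOpen Ω) (hΩb : Bornology.IsBounded Ω)
    (hu : MemPhi0 Ω u) (hu2 : ContDiffOn ℝ 2 u (Eu Ω u)) :
    Tendsto
      (fun r => ∫ x in Ω, testApprox Ω u r x * bracket (fluxApprox H u r 0) (fluxApprox H u r 1) x)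
      atTop (𝓝 (∫ x in Ω, u x * detH H u x)) := by
  obtain ⟨A, hA⟩ := exists_testApprox_le hΩ hΩb hu
  obtain ⟨B, hB⟩ := exists_fluxApprox_le hH hH' hΩ hΩb hu hu2
  refine tendsto_integral_filter_of_dominated_convergence
    (fun x => A * (2 * B ^ 2) * ‖fderiv ℝ (gradient u) x‖ ^ 2) (.of_forall fun r => ?_) ?_
    (hu.memLp_fderiv_gradient.integrable_sq.const_mul _) ?_
  · exact ((contDiff_testApprox hΩ hu r).continuous.continuousOn.mul (continuousOn_bracket hΩ
      (contDiffOn_fluxApprox hH' hΩ hΩb hu hu2 r 0)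
      (contDiffOn_fluxApprox hH' hΩ hΩb hu hu2 r 1))).aestronglyMeasurable hΩ.measurableSet
  · filter_upwards [eventually_gt_atTop 0] with r hr
    filter_upwards [ae_restrict_mem hΩ.measurableSet] with x hx
    have test_le := (hA r hr x hx).1
    have flux_le (i : Fin 2) := (hB r hr x hx i).2
    have := (norm_nonneg _).trans (flux_le 0)
    have := (abs_nonneg _).trans test_le
    rw [Real.norm_eq_abs, abs_mul]
    calc |testApprox Ω u r x| * |bracket (fluxApprox H u r 0) (fluxApprox H u r 1) x|
        ≤ A * (2 * (B * ‖fderiv ℝ (gradient u) x‖ * (B * ‖fderiv ℝ (gradient u) x‖))) := by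
          grw [abs_bracket_le, test_le, flux_le, flux_le]
      _ = _ := by ring
  · filter_upwards [ae_restrict_mem hΩ.measurableSet, hu.ae_hessian_eq_zero hΩ] with x hx hx'
    exact tendsto_const_nhds.congr'
      ((eventually_testApprox_mul_bracket_eq hH' hΩ hΩb hu hu2 hx hx').mono fun _ => Eq.symm)

lemma tendsto_setIntegral_fluxApprox_mul_bracket_sub (hH : IsPosHomogeneous 1 H)
    (hH' : ContDiffOn ℝ 2 H {0}ᶜ) (hΩ : IsOpen Ω) (hΩb : Bornology.IsBounded Ω)
    (hu : MemPhi0 Ω u) (hu2 : ContDiffOn ℝ 2 u (Eu Ω u)) :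
    Tendsto
      (fun r => ∫ x in Ω,
        (fluxApprox H u r 0 x * bracket (testApprox Ω u r) (fluxApprox H u r 1) x -
          fluxApprox H u r 1 x * bracket (testApprox Ω u r) (fluxApprox H u r 0) x))
      atTop (𝓝 (∫ x in Ω, -(kH H u x * H (gradient u x) ^ 3))) := by
  obtain ⟨A, hA⟩ := exists_testApprox_le hΩ hΩb hu
  obtain ⟨B, hB⟩ := exists_fluxApprox_le hH hH' hΩ hΩb hu hu2
  have : IsFiniteMeasure (volume.restrict Ω) := isFiniteMeasure_restrict.2 hΩb.measure_lt_top.ne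
  refine tendsto_integral_filter_of_dominated_convergence
    (fun x => 4 * A * B ^ 2 * ‖fderiv ℝ (gradient u) x‖) (.of_forall fun r => ?_) ?_
    ((hu.memLp_fderiv_gradient.integrable one_le_two).const_mul _) ?_
  · have flux_contDiff (i : Fin 2) := contDiffOn_fluxApprox hH' hΩ hΩb hu hu2 r i
    have bracket_continuous (i : Fin 2) :=
      continuousOn_bracket hΩ (contDiff_testApprox hΩ hu r).contDiffOn (flux_contDiff i)
    exact (((flux_contDiff 0).continuousOn.mul (bracket_continuous 1)).sub
      ((flux_contDiff 1).continuousOn.mul (bracket_continuous 0))).aestronglyMeasurable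
        hΩ.measurableSet
  · filter_upwards [eventually_gt_atTop 0] with r hr
    filter_upwards [ae_restrict_mem hΩ.measurableSet] with x hx
    have test_le := (hA r hr x hx).2
    have flux_le (i : Fin 2) := hB r hr x hx i
    have := (norm_nonneg _).trans test_le
    have := (abs_nonneg _).trans (flux_le 0).1
    have term_le (i j : Fin 2) :
        |fluxApprox H u r i x * bracket (testApprox Ω u r) (fluxApprox H u r j) x| ≤
          B * (2 * (A * (B * ‖fderiv ℝ (gradient u) x‖))) := by
      rw [abs_mul]
      grw [abs_bracket_le, test_le, (flux_le i).1, (flux_le j).2]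
    rw [Real.norm_eq_abs]
    refine (abs_sub _ _).trans ((add_le_add (term_le 0 1) (term_le 1 0)).trans_eq ?_)
    ring
  · filter_upwards [ae_restrict_mem hΩ.measurableSet, hu.ae_hessian_eq_zero hΩ] with x hx hx'
    exact tendsto_const_nhds.congr' ((eventually_fluxApprox_mul_bracket_sub_eq hH hH' hΩ hΩb hu
      hu2 hx hx').mono fun _ => Eq.symm)

end Approximation

theorem hessian_integral_representation_general {H u : E2 → ℝ} {Ω : Set E2}
    (hH : IsPosHomogeneous 1 H) (hH' : ContDiffOn ℝ 2 H {0}ᶜ) (hΩ : IsOpen Ω)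
    (hΩb : Bornology.IsBounded Ω) (hu : MemPhi0 Ω u) (hu2 : ContDiffOn ℝ 2 u (Eu Ω u)) :
    ∫ x in Ω, u x * detH H u x = (1 / 2) * ∫ x in Ω, kH H u x * H (gradient u x) ^ 3 := by
  have weak_form (r : ℝ) := setIntegral_mul_bracket hΩ (contDiff_testApprox hΩ hu r)
    (hasCompactSupport_testApprox hΩb hu r) (tsupport_testApprox_subset hu r)
    (contDiffOn_fluxApprox hH' hΩ hΩb hu hu2 r 0) (contDiffOn_fluxApprox hH' hΩ hΩb hu hu2 r 1)
  have lhs_tendsto := tendsto_setIntegral_testApprox_mul_bracket hH hH' hΩ hΩb hu hu2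
  have rhs_tendsto := (tendsto_setIntegral_fluxApprox_mul_bracket_sub hH hH' hΩ hΩb hu
    hu2).const_mul (-(1 / 2))
  simp only [← weak_form] at rhs_tendsto
  rw [tendsto_nhds_unique lhs_tendsto rhs_tendsto, integral_neg, neg_mul_neg]

/-- for `u ∈ Φ₀(Ω) ∩ C²(E_u)` on a bounded convex open `Ω` with `C²`
boundary, the anisotropic Hessian integral satisfies
`I_H[u,Ω] = ∫_Ω u det_H[u] dx = (1/2) ∫_Ω k_H(x) H(∇u)³ dx`. -/
theorem hessian_integral_representation
    (H : E2 → ℝ) (hH : IsAnisoNorm H)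
    (Ω : Set E2) (hΩo : IsOpen Ω) (hΩb : Bornology.IsBounded Ω) (hΩc : Convex ℝ Ω)
    (hΩbd : HasC2Boundary Ω)
    (u : E2 → ℝ) (hu : MemPhi0 Ω u) (hu2 : ContDiffOn ℝ 2 u (Eu Ω u)) :
    ∫ x in Ω, u x * detH H u x
      = (1 / 2) * ∫ x in Ω, kH H u x * H (gradient u x) ^ 3 :=
  hessian_integral_representation_general
    (fun t ht p => by simp [hH.homog, abs_of_pos ht]) hH.smooth hΩo hΩb hu hu2
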